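/- For every integer k ≥ 2 and every non-negative integer n, the number of partitions of n in which each part is either even but not congruent to 4k−2 modulo 4k, or odd and congruent to 2k−1 or 4k−1 modulo 4k, equals the number of partitions of n in which, whenever an odd part 2j+1 appears, no other part equals any of 2j+1, 2j, 2j−1, ..., 2j−2k+3, and no part equals any of 1, 3, ..., 2k−3. -/

import Mathlib

/-!
Let `G r` be the generating function of the multisets of `r` parts, zeros allowed, subject to the
gap condition. Such a multiset of `r + 1` parts contains `0`, which can be removed; or contains
neither `0` nor `2k - 1`, and then `2` can be subtracted from every part; or contains `2k - 1` but
not `0`, and then removing `2k - 1` and subtracting `2k` from the other parts leaves an arbitrary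
multiset of `r` parts. Hence
`G (r + 1) = G r + q ^ (2 (r + 1)) * G (r + 1) + q ^ (2k (r + 1) - 1) * G r`, and in the limit the
generating function of the second class is `∏ (1 + q ^ (2ki - 1)) / ∏ (1 - q ^ (2i))` over `i ≥ 1`.
Writing `1 + x = (1 - x ^ 2) / (1 - x)` turns this into the Euler product of the first class, since
the numbers `2 (2ki - 1)` are exactly the even parts it excludes.
-/

namespace Andrews

open PowerSeries Filter
open scoped PowerSeries.WithPiTopology Topology

section WeightGenFun

variable {α β : Type*} {w : α → ℕ} {S T : Set α}

/-- The generating function `∑ a ∈ S, X ^ w a` of the elements of `S` by their weight `w`. A weight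
taken infinitely often on `S` contributes `0`, the junk value of `Set.ncard`. -/
noncomputable def weightGenFun (w : α → ℕ) (S : Set α) : ℤ⟦X⟧ :=
  PowerSeries.mk fun n ↦ ({a ∈ S | w a = n}.ncard : ℤ)

theorem weightGenFun_union (hST : Disjoint S T) (hfin : ∀ n, {a ∈ S ∪ T | w a = n}.Finite) :
    weightGenFun w (S ∪ T) = weightGenFun w S + weightGenFun w T := by
  ext n
  have hfibre : {a ∈ S ∪ T | w a = n} = {a ∈ S | w a = n} ∪ {a ∈ T | w a = n} :=
    Set.union_inter_distrib_right ..
  have hdisj : Disjoint {a ∈ S | w a = n} {a ∈ T | w a = n} :=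
    hST.mono (Set.sep_subset ..) (Set.sep_subset ..)
  obtain ⟨hS, hT⟩ := Set.finite_union.1 (hfibre ▸ hfin n)
  simp only [weightGenFun, coeff_mk, map_add, hfibre, Set.ncard_union_eq hdisj hS hT,
    Nat.cast_add]

theorem weightGenFun_image {v : β → ℕ} {f : α → β} {d : ℕ} (hf : Function.Injective f)
    (hw : ∀ a ∈ S, v (f a) = d + w a) :
    weightGenFun v (f '' S) = X ^ d * weightGenFun w S := by
  ext n
  rw [coeff_X_pow_mul', weightGenFun, weightGenFun, coeff_mk, coeff_mk]
  split_ifs with hd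
  · have hfibre : {b ∈ f '' S | v b = n} = f '' {a ∈ S | w a = n - d} := by
      ext b
      constructor
      · rintro ⟨⟨a, ha, rfl⟩, hb⟩
        exact ⟨a, ⟨ha, by have := hw a ha; lia⟩, rfl⟩
      · rintro ⟨a, ⟨ha, hwa⟩, rfl⟩
        exact ⟨⟨a, ha, rfl⟩, by have := hw a ha; lia⟩
    rw [hfibre, Set.ncard_image_of_injective _ hf]
  · have hfibre : {b ∈ f '' S | v b = n} = ∅ := by
      refine Set.eq_empty_of_forall_notMem ?_
      rintro _ ⟨⟨a, ha, rfl⟩, hb⟩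
      have := hw a ha
      lia
    simp only [hfibre, Set.ncard_empty, Nat.cast_zero]

end WeightGenFun

section OddGaps

variable {k r : ℕ} {s : Multiset ℕ}

/-- Every odd part `b` exceeds the parts at or below it by at least `2 * k - 1`, where a part `0`
is always presumed, so that `b ≥ 2 * k - 1`. Actual parts `0` are allowed, in order to pad
partitions to a fixed number of parts. -/
def HasOddGaps (k : ℕ) (s : Multiset ℕ) : Prop :=
  ∀ b ∈ s, Odd b → 2 * k ≤ b + 1 ∧ ∀ c ∈ s.erase b, b < c ∨ c + 2 * k ≤ b + 1

theorem hasOddGaps_iff :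
    HasOddGaps k s ↔
      (∀ b ∈ s, Odd b → ∀ c : ℕ, b + 2 ≤ c + 2 * k → c ≤ b → s.count c ≤ if c = b then 1 else 0) ∧
        ∀ c ∈ s, Odd c → ¬ c + 3 ≤ 2 * k := by
  have hgap (b : ℕ) (hb : b ∈ s) : (∀ c ∈ s.erase b, b < c ∨ c + 2 * k ≤ b + 1) ↔
      ∀ c, b + 2 ≤ c + 2 * k → c ≤ b → s.count c ≤ if c = b then 1 else 0 := by
    refine forall_congr' fun c ↦ ?_
    have hcount : c ∈ s.erase b ↔ ¬ s.count c ≤ if c = b then 1 else 0 := by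
      rw [← Multiset.count_pos]
      split_ifs with hcb
      · rw [hcb, Multiset.count_erase_self]
        lia
      · rw [Multiset.count_erase_of_ne hcb]
        lia
    have := Multiset.count_pos.2 hb
    rw [hcount]
    lia
  have hsmall (b : ℕ) (hodd : Odd b) : 2 * k ≤ b + 1 ↔ ¬ b + 3 ≤ 2 * k := by
    obtain ⟨j, rfl⟩ := hodd
    lia
  constructor
  · exact fun h ↦ ⟨fun b hb hodd ↦ (hgap b hb).1 (h b hb hodd).2,
      fun b hb hodd ↦ (hsmall b hodd).1 (h b hb hodd).1⟩
  · exact fun h b hb hodd ↦ ⟨(hsmall b hodd).2 (h.2 b hb hodd), (hgap b hb).2 (h.1 b hb hodd)⟩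

theorem hasOddGaps_cons {a : ℕ} :
    HasOddGaps k (a ::ₘ s) ↔ HasOddGaps k s ∧
      (Odd a → 2 * k ≤ a + 1 ∧ ∀ c ∈ s, a < c ∨ c + 2 * k ≤ a + 1) ∧
      ∀ b ∈ s, Odd b → b < a ∨ a + 2 * k ≤ b + 1 := by
  have herase (b : ℕ) (hb : b ∈ s) (c : ℕ) : c ∈ (a ::ₘ s).erase b ↔ c = a ∨ c ∈ s.erase b := by
    rw [Multiset.erase_cons_tail_of_mem hb, Multiset.mem_cons]
  simp only [HasOddGaps, Multiset.forall_mem_cons, Multiset.erase_cons_head]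
  grind

theorem hasOddGaps_zero_cons : HasOddGaps k (0 ::ₘ s) ↔ HasOddGaps k s := by
  rw [hasOddGaps_cons]
  refine ⟨And.left, fun hs ↦ ⟨hs, by simp, fun b hb hodd ↦ Or.inr ?_⟩⟩
  simpa using (hs b hb hodd).1

theorem hasOddGaps_add_replicate_zero (m : ℕ) :
    HasOddGaps k (s + Multiset.replicate m 0) ↔ HasOddGaps k s := by
  induction m with
  | zero => simp
  | succ m ih => rw [Multiset.replicate_succ, Multiset.add_cons, hasOddGaps_zero_cons, ih]

theorem hasOddGaps_map_add {d : ℕ} (hd : Even d) :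
    HasOddGaps k (s.map (· + d)) ↔
      ∀ b ∈ s, Odd b → 2 * k ≤ b + d + 1 ∧ ∀ c ∈ s.erase b, b < c ∨ c + 2 * k ≤ b + 1 := by
  simp only [HasOddGaps, Multiset.forall_mem_map_iff, Nat.odd_add, hd, iff_true,
    ← Multiset.map_erase _ (add_left_injective d)]
  grind

theorem hasOddGaps_map_add_two :
    HasOddGaps k (s.map (· + 2)) ∧ 2 * k - 1 ∉ s.map (· + 2) ↔ HasOddGaps k s := by
  rw [hasOddGaps_map_add even_two]
  simp only [HasOddGaps, Multiset.mem_map, not_exists, not_and]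
  refine ⟨fun ⟨h, hmem⟩ b hb hodd ↦ ⟨?_, (h b hb hodd).2⟩,
    fun h ↦ ⟨fun b hb hodd ↦ ⟨?_, (h b hb hodd).2⟩, fun b hb hbk ↦ ?_⟩⟩
  · have := h b hb hodd
    have := hmem b hb
    obtain ⟨j, rfl⟩ := hodd
    lia
  · have := h b hb hodd
    lia
  · have := h b hb (by grind)
    lia

theorem hasOddGaps_cons_map_add (hk : 0 < k) :
    HasOddGaps k ((2 * k - 1) ::ₘ s.map (· + 2 * k)) ↔ HasOddGaps k s := by
  rw [hasOddGaps_cons, hasOddGaps_map_add (even_two_mul k)]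
  simp only [HasOddGaps, Multiset.forall_mem_map_iff]
  grind

theorem HasOddGaps.two_mul_le (hs : HasOddGaps k ((2 * k - 1) ::ₘ s)) (hk : 0 < k)
    (h0 : 0 ∉ s) : ∀ c ∈ s, 2 * k ≤ c := by
  intro c hc
  have hodd : Odd (2 * k - 1) := ⟨k - 1, by lia⟩
  have := ((hasOddGaps_cons.1 hs).2.1 hodd).2 c hc
  have := ne_of_mem_of_not_mem hc h0
  lia

theorem HasOddGaps.two_le (hs : HasOddGaps k s) (hk : 0 < k) (h0 : 0 ∉ s)
    (hmem : 2 * k - 1 ∉ s) : ∀ c ∈ s, 2 ≤ c := by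
  intro c hc
  have := hs c hc
  have := ne_of_mem_of_not_mem hc h0
  have := ne_of_mem_of_not_mem hc hmem
  grind

theorem exists_eq_map_add {d : ℕ} (hs : ∀ c ∈ s, d ≤ c) : ∃ t : Multiset ℕ, s = t.map (· + d) := by
  refine ⟨s.map (· - d), ?_⟩
  rw [Multiset.map_map]
  exact ((Multiset.map_congr rfl fun c hc ↦ Nat.sub_add_cancel (hs c hc)).trans s.map_id').symm

/-- The multisets of `r` parts, some of which may be `0`, satisfying the gap condition. -/
def gapMultisets (k r : ℕ) : Set (Multiset ℕ) :=
  {s | s.card = r ∧ HasOddGaps k s}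

theorem gapMultisets_zero : gapMultisets k 0 = {0} := by
  ext s
  simp +contextual [gapMultisets, HasOddGaps]

theorem finite_card_sum (r n : ℕ) : {s : Multiset ℕ | s.card = r ∧ s.sum = n}.Finite := by
  refine (Set.finite_Iic (r • Multiset.range (n + 1))).subset fun s ⟨hr, hn⟩ ↦ ?_
  refine Multiset.le_iff_count.2 fun c ↦ ?_
  by_cases hc : c ∈ s
  · have hcn : c ≤ n := hn ▸ Multiset.le_sum_of_mem hc
    have : (Multiset.range (n + 1)).count c = 1 :=
      Multiset.count_eq_one_of_mem (Multiset.nodup_range _) (Multiset.mem_range.2 (by lia))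
    simpa only [Multiset.count_nsmul, this, mul_one, hr] using Multiset.count_le_card c s
  · simp [Multiset.count_eq_zero.2 hc]

theorem gapMultisets_succ (hk : 0 < k) (r : ℕ) :
    gapMultisets k (r + 1) = (0 ::ₘ ·) '' gapMultisets k r ∪
      (Multiset.map (· + 2) '' gapMultisets k (r + 1) ∪
        (fun t ↦ (2 * k - 1) ::ₘ t.map (· + 2 * k)) '' gapMultisets k r) := by
  ext s
  constructor
  · rintro ⟨hr, hs⟩
    by_cases h0 : 0 ∈ s
    · obtain ⟨t, rfl⟩ := Multiset.exists_cons_of_mem h0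
      exact Or.inl ⟨t, ⟨by simpa using hr, hasOddGaps_zero_cons.1 hs⟩, rfl⟩
    by_cases hmem : 2 * k - 1 ∈ s
    · obtain ⟨u, rfl⟩ := Multiset.exists_cons_of_mem hmem
      obtain ⟨t, rfl⟩ := exists_eq_map_add
        (hs.two_mul_le hk (mt Multiset.mem_cons_of_mem h0))
      exact Or.inr (Or.inr ⟨t, ⟨by simpa using hr, (hasOddGaps_cons_map_add hk).1 hs⟩, rfl⟩)
    · obtain ⟨t, rfl⟩ := exists_eq_map_add (hs.two_le hk h0 hmem)
      exact Or.inr (Or.inl ⟨t, ⟨by simpa using hr, hasOddGaps_map_add_two.1 ⟨hs, hmem⟩⟩, rfl⟩)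
  · rintro (⟨t, ⟨hr, ht⟩, rfl⟩ | ⟨t, ⟨hr, ht⟩, rfl⟩ | ⟨t, ⟨hr, ht⟩, rfl⟩)
    · exact ⟨by simpa using hr, hasOddGaps_zero_cons.2 ht⟩
    · exact ⟨by simpa using hr, (hasOddGaps_map_add_two.2 ht).1⟩
    · exact ⟨by simpa using hr, (hasOddGaps_cons_map_add hk).2 ht⟩

theorem disjoint_image_zero_cons_gapMultisets (hk : 0 < k) :
    Disjoint ((0 ::ₘ ·) '' gapMultisets k r)
      (Multiset.map (· + 2) '' gapMultisets k (r + 1) ∪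
        (fun t ↦ (2 * k - 1) ::ₘ t.map (· + 2 * k)) '' gapMultisets k r) := by
  rw [Set.disjoint_left]
  rintro _ ⟨s, -, rfl⟩ h
  have h0 : 0 ∈ 0 ::ₘ s := Multiset.mem_cons_self 0 s
  obtain ⟨t, -, h⟩ | ⟨t, -, h⟩ := h <;> dsimp only at h <;> rw [← h] at h0
  · simp at h0
  · simp [hk.ne', show 0 ≠ 2 * k - 1 by lia] at h0

theorem disjoint_image_map_add_two_gapMultisets :
    Disjoint (Multiset.map (· + 2) '' gapMultisets k (r + 1))
      ((fun t ↦ (2 * k - 1) ::ₘ t.map (· + 2 * k)) '' gapMultisets k r) := by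
  rw [Set.disjoint_left]
  rintro _ ⟨s, hs, rfl⟩ ⟨t, -, h⟩
  exact (hasOddGaps_map_add_two.2 hs.2).2 (h ▸ Multiset.mem_cons_self _ _)

end OddGaps

section AndrewsParts

variable {k : ℕ}

/-- The odd parts of Andrews's first class, `2 * k - 1, 4 * k - 1, 6 * k - 1, …`. -/
def andrewsOddPart (k i : ℕ) : ℕ :=
  2 * k * (i + 1) - 1

theorem andrewsOddPart_add_one (hk : 0 < k) (i : ℕ) :
    andrewsOddPart k i + 1 = 2 * k * (i + 1) :=
  Nat.sub_add_cancel (Nat.mul_pos (Nat.mul_pos two_pos hk) i.succ_pos)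

theorem strictMono_andrewsOddPart (hk : 0 < k) : StrictMono (andrewsOddPart k) := by
  intro i j hij
  have := Nat.mul_lt_mul_of_pos_left (Nat.succ_lt_succ hij) (Nat.mul_pos two_pos hk)
  have := andrewsOddPart_add_one hk i
  have := andrewsOddPart_add_one hk j
  lia

/-- The first class of parts in Andrews's identity: the even numbers `≢ -2 (mod 4k)` and the odd
numbers `≡ -1 (mod 2k)`. -/
def IsAndrewsPart (k c : ℕ) : Prop :=
  (Even c ∧ ¬ 4 * k ∣ c + 2) ∨ (Odd c ∧ 2 * k ∣ c + 1)

theorem isAndrewsPart_iff (hk : 0 < k) (c : ℕ) :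
    IsAndrewsPart k c ↔ (Even c ∧ c % (4 * k) ≠ 4 * k - 2) ∨
      (Odd c ∧ (c % (4 * k) = 2 * k - 1 ∨ c % (4 * k) = 4 * k - 1)) := by
  have heven : c % (4 * k) = 4 * k - 2 ↔ 4 * k ∣ c + 2 :=
    Nat.mod_eq_sub_iff two_pos (by lia)
  have hodd : 2 * k ∣ c + 1 ↔ c % (4 * k) = 2 * k - 1 ∨ c % (4 * k) = 4 * k - 1 := by
    have hlt : c % (4 * k) < 4 * k := Nat.mod_lt c (by lia)
    have hmod : c % (4 * k) % (2 * k) = c % (2 * k) := Nat.mod_mod_of_dvd c ⟨2, by ring⟩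
    rw [← Nat.mod_eq_sub_iff one_pos (by lia : 1 ≤ 2 * k), ← hmod]
    rcases lt_or_ge (c % (4 * k)) (2 * k) with h | h
    · rw [Nat.mod_eq_of_lt h]
      lia
    · rw [Nat.mod_eq_sub_mod h, Nat.mod_eq_of_lt (by lia)]
      lia
  rw [IsAndrewsPart, ne_eq, heven, hodd]

theorem mem_range_andrewsOddPart (hk : 0 < k) {c : ℕ} :
    c ∈ Set.range (andrewsOddPart k) ↔ 2 * k ∣ c + 1 := by
  constructor
  · rintro ⟨i, rfl⟩
    exact ⟨i + 1, andrewsOddPart_add_one hk i⟩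
  · rintro ⟨_ | i, hi⟩
    · lia
    · exact ⟨i, by have := andrewsOddPart_add_one hk i; lia⟩

theorem mem_range_two_mul_andrewsOddPart (hk : 0 < k) {c : ℕ} :
    c ∈ Set.range (fun i ↦ 2 * andrewsOddPart k i) ↔ 4 * k ∣ c + 2 := by
  constructor
  · rintro ⟨i, rfl⟩
    exact ⟨i + 1, by linear_combination 2 * andrewsOddPart_add_one hk i⟩
  · rintro ⟨_ | i, hi⟩
    · lia
    · exact ⟨i, by dsimp only; linarith [andrewsOddPart_add_one hk i]⟩

theorem strictMono_two_mul_succ : StrictMono fun i ↦ 2 * (i + 1) := fun i j hij ↦ by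
  dsimp only
  lia

theorem mem_range_two_mul_succ {c : ℕ} :
    c ∈ Set.range (fun i ↦ 2 * (i + 1)) ↔ 0 < c ∧ Even c := by
  constructor
  · rintro ⟨i, rfl⟩
    exact ⟨by simp, even_two_mul _⟩
  · rintro ⟨hc, j, rfl⟩
    exact ⟨j - 1, by dsimp only; lia⟩

theorem odd_of_two_mul_dvd_succ {c : ℕ} (hc : 2 * k ∣ c + 1) : Odd c := by
  have := even_iff_two_dvd.2 (dvd_of_mul_right_dvd hc)
  grind

theorem even_of_four_mul_dvd_add_two {c : ℕ} (hc : 4 * k ∣ c + 2) : Even c := by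
  have : 2 ∣ c + 2 := (Dvd.intro (2 * k) (by ring)).trans hc
  grind

theorem range_union_range_andrewsOddPart (hk : 0 < k) :
    Set.range (fun i ↦ 2 * (i + 1)) ∪ Set.range (andrewsOddPart k) =
      {c | 0 < c ∧ IsAndrewsPart k c} ∪ Set.range fun i ↦ 2 * andrewsOddPart k i := by
  ext c
  have hodd := odd_of_two_mul_dvd_succ (k := k) (c := c)
  have heven := even_of_four_mul_dvd_add_two (k := k) (c := c)
  have hpos (h : 4 * k ∣ c + 2) : 0 < c := by
    refine Nat.pos_of_ne_zero ?_
    rintro rfl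
    have := Nat.le_of_dvd two_pos h
    lia
  simp only [Set.mem_union, mem_range_andrewsOddPart hk, mem_range_two_mul_andrewsOddPart hk,
    mem_range_two_mul_succ, Set.mem_ofPred_eq, IsAndrewsPart]
  grind

theorem disjoint_range_andrewsOddPart (hk : 0 < k) :
    Disjoint (Set.range fun i ↦ 2 * (i + 1)) (Set.range (andrewsOddPart k)) := by
  rw [Set.disjoint_left]
  intro c hc hc'
  have := odd_of_two_mul_dvd_succ ((mem_range_andrewsOddPart hk).1 hc')
  have := (mem_range_two_mul_succ.1 hc).2
  grind

theorem disjoint_isAndrewsPart_range_two_mul (hk : 0 < k) :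
    Disjoint {c | 0 < c ∧ IsAndrewsPart k c} (Set.range fun i ↦ 2 * andrewsOddPart k i) := by
  rw [Set.disjoint_left]
  intro c hc hc'
  have hdvd := (mem_range_two_mul_andrewsOddPart hk).1 hc'
  have := even_of_four_mul_dvd_add_two hdvd
  grind [IsAndrewsPart]

end AndrewsParts

section GapGenFun

variable {k r : ℕ}

theorem finite_sum_eq_gapMultisets (k r n : ℕ) : {s ∈ gapMultisets k r | s.sum = n}.Finite :=
  (finite_card_sum r n).subset fun _ ⟨hs, hn⟩ ↦ ⟨hs.1, hn⟩

theorem weightGenFun_gapMultisets_zero (k : ℕ) :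
    weightGenFun Multiset.sum (gapMultisets k 0) = 1 := by
  ext n
  have hfibre : {s ∈ gapMultisets k 0 | s.sum = n} = if n = 0 then {0} else ∅ := by
    ext s
    grind [gapMultisets_zero]
  rw [weightGenFun, coeff_mk, hfibre, coeff_one]
  split_ifs <;> simp

theorem sum_map_add_const (s : Multiset ℕ) (d : ℕ) :
    (s.map (· + d)).sum = s.sum + s.card * d := by
  simp [Multiset.sum_map_add]

theorem weightGenFun_gapMultisets_succ (hk : 0 < k) (r : ℕ) :
    weightGenFun Multiset.sum (gapMultisets k (r + 1)) =
      weightGenFun Multiset.sum (gapMultisets k r) +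
        (X ^ (2 * (r + 1)) * weightGenFun Multiset.sum (gapMultisets k (r + 1)) +
          X ^ andrewsOddPart k r * weightGenFun Multiset.sum (gapMultisets k r)) := by
  have hfin := finite_sum_eq_gapMultisets k (r + 1)
  conv_lhs => rw [gapMultisets_succ hk]
  rw [gapMultisets_succ hk] at hfin
  rw [weightGenFun_union (disjoint_image_zero_cons_gapMultisets hk) hfin,
    weightGenFun_union disjoint_image_map_add_two_gapMultisets
      fun n ↦ (hfin n).subset fun s hs ↦ ⟨Or.inr hs.1, hs.2⟩]
  congr 1
  · rw [weightGenFun_image (w := Multiset.sum) (d := 0)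
      (fun s t hst ↦ (Multiset.cons_inj_right 0).1 hst) fun s _ ↦ Multiset.sum_cons 0 s,
      pow_zero, one_mul]
  · congr 1
    · refine weightGenFun_image (Multiset.map_injective (add_left_injective 2)) fun s hs ↦ ?_
      rw [sum_map_add_const, hs.1]
      ring
    · refine weightGenFun_image (fun s t hst ↦ Multiset.map_injective
        (add_left_injective (2 * k)) ((Multiset.cons_inj_right _).1 hst)) fun s hs ↦ ?_
      have := andrewsOddPart_add_one hk r
      rw [Multiset.sum_cons, sum_map_add_const, hs.1]
      lia

theorem weightGenFun_gapMultisets_mul_prod (hk : 0 < k) (r : ℕ) :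
    weightGenFun Multiset.sum (gapMultisets k r) * ∏ i ∈ Finset.range r, (1 - X ^ (2 * (i + 1))) =
      ∏ i ∈ Finset.range r, (1 + X ^ andrewsOddPart k i) := by
  induction r with
  | zero => simp [weightGenFun_gapMultisets_zero]
  | succ r ih =>
    rw [Finset.prod_range_succ, Finset.prod_range_succ, ← ih]
    linear_combination (∏ i ∈ Finset.range r, (1 - X ^ (2 * (i + 1)))) *
      weightGenFun_gapMultisets_succ hk r

theorem ncard_sum_eq_gapMultisets {n : ℕ} (hnr : n ≤ r) :
    {s ∈ gapMultisets k r | s.sum = n}.ncard =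
      Nat.card {p : n.Partition // HasOddGaps k p.parts} := by
  let pad (p : {p : n.Partition // HasOddGaps k p.parts}) : Multiset ℕ :=
    p.1.parts + Multiset.replicate (r - p.1.parts.card) 0
  have hfilter (p : {p : n.Partition // HasOddGaps k p.parts}) :
      (pad p).filter (· ≠ 0) = p.1.parts := by
    have hpos : ∀ c ∈ p.1.parts, c ≠ 0 := fun c hc ↦ (p.1.parts_pos hc).ne'
    have hzero : ∀ c ∈ Multiset.replicate (r - p.1.parts.card) 0, ¬ c ≠ 0 := fun c hc ↦
      not_not.2 (Multiset.eq_of_mem_replicate hc)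
    rw [Multiset.filter_add, Multiset.filter_eq_self.2 hpos, Multiset.filter_eq_nil.2 hzero,
      add_zero]
  have hinj : Function.Injective pad := fun p q hpq ↦
    Subtype.ext <| Nat.Partition.ext <| by rw [← hfilter p, hpq, hfilter q]
  have hrange : Set.range pad = {s ∈ gapMultisets k r | s.sum = n} := by
    ext s
    constructor
    · rintro ⟨p, rfl⟩
      have hcard : p.1.parts.card ≤ n := by
        simpa [p.1.parts_sum] using Multiset.card_nsmul_le_sum fun c hc ↦ p.1.parts_pos hc
      refine ⟨⟨?_, (hasOddGaps_add_replicate_zero _).2 p.2⟩, ?_⟩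
      · rw [Multiset.card_add, Multiset.card_replicate]
        lia
      · rw [Multiset.sum_add, Multiset.sum_replicate, p.1.parts_sum, smul_zero, add_zero]
    · rintro ⟨⟨hr, hs⟩, hn⟩
      have hsplit : s.filter (· ≠ 0) + Multiset.replicate (s.count 0) 0 = s := by
        rw [add_comm, ← Multiset.filter_eq', Multiset.filter_add_not]
      have hcard : (s.filter (· ≠ 0)).card + s.count 0 = r := by
        rw [← Multiset.card_replicate (s.count 0) 0, ← Multiset.card_add, hsplit, hr]
      refine ⟨⟨Nat.Partition.ofSums n s hn, ?_⟩, ?_⟩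
      · rwa [← hsplit, hasOddGaps_add_replicate_zero] at hs
      · rw [← Nat.sub_eq_of_eq_add' hcard.symm] at hsplit
        exact hsplit
  rw [← hrange, ← Nat.card_coe_set_eq, Nat.card_range_of_injective hinj]

end GapGenFun

section EulerProduct

variable {R : Type*} [CommRing R]

theorem le_order_X_pow (c : ℕ) : (c : ℕ∞) ≤ (X ^ c : R⟦X⟧).order :=
  le_order _ _ fun i hi ↦ by rw [coeff_X_pow, if_neg (Nat.cast_lt.1 hi).ne]

variable [TopologicalSpace R]

theorem multipliable_one_add_of_le_order {f : ℕ → R⟦X⟧} (hf : ∀ i : ℕ, (i : ℕ∞) ≤ (f i).order) :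
    Multipliable (1 + f ·) := by
  refine WithPiTopology.multipliable_one_add_of_tendsto_order_atTop_nhds_top R ?_
  rw [ENat.tendsto_nhds_top_iff_natCast_lt]
  exact fun n ↦ (eventually_gt_atTop n).mono fun i hi ↦ (Nat.cast_lt.2 hi).trans_le (hf i)

theorem multipliable_one_add_X_pow {a : ℕ → ℕ} (ha : StrictMono a) :
    Multipliable fun i ↦ (1 + X ^ a i : R⟦X⟧) :=
  multipliable_one_add_of_le_order fun _ ↦
    (Nat.cast_le.2 ha.le_apply).trans (le_order_X_pow _)

theorem multipliable_one_sub_X_pow_subtype (S : Set ℕ) :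
    Multipliable fun c : S ↦ (1 - X ^ (c : ℕ) : R⟦X⟧) := by
  have hindicator : S.mulIndicator (fun c ↦ (1 - X ^ c : R⟦X⟧)) =
      fun c ↦ 1 + S.indicator (fun c ↦ (-X ^ c : R⟦X⟧)) c := by
    ext1 c
    by_cases hc : c ∈ S <;> simp [hc, sub_eq_add_neg]
  refine multipliable_subtype_iff_mulIndicator (f := fun c ↦ (1 - X ^ c : R⟦X⟧)).2 ?_
  rw [hindicator]
  refine multipliable_one_add_of_le_order fun c ↦ ?_
  by_cases hc : c ∈ S
  · rw [Set.indicator_of_mem hc, order_neg]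
    exact le_order_X_pow c
  · rw [Set.indicator_of_notMem hc, order_zero]
    exact le_top

theorem multipliable_one_sub_X_pow {a : ℕ → ℕ} (ha : StrictMono a) :
    Multipliable fun i ↦ (1 - X ^ a i : R⟦X⟧) :=
  (Equiv.ofInjective a ha.injective).multipliable_iff.2
    (multipliable_one_sub_X_pow_subtype (Set.range a))

variable (R) in
/-- The product `∏ c ∈ S, (1 - X ^ c)`, inverse to the generating function of the partitions with
parts in `S` when `0 ∉ S`. -/
noncomputable def eulerProduct (S : Set ℕ) : R⟦X⟧ :=
  ∏' c : S, (1 - X ^ (c : ℕ))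

theorem eulerProduct_range {a : ℕ → ℕ} (ha : StrictMono a) :
    eulerProduct R (Set.range a) = ∏' i, (1 - X ^ a i) :=
  tprod_range (fun c ↦ 1 - X ^ c) ha.injective

section T2Space

variable [T2Space R]

theorem eulerProduct_ne_zero [Nontrivial R] {S : Set ℕ} (hS : 0 ∉ S) : eulerProduct R S ≠ 0 := by
  intro h
  have hone (c : S) : constantCoeff (1 - X ^ (c : ℕ) : R⟦X⟧) = 1 := by
    simp [ne_of_mem_of_not_mem c.2 hS]
  have hconst := (multipliable_one_sub_X_pow_subtype (R := R) S).map_tprod _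
    (WithPiTopology.continuous_constantCoeff R)
  rw [← eulerProduct, h, map_zero, tprod_congr hone, tprod_one] at hconst
  exact zero_ne_one hconst

variable [IsTopologicalRing R]

theorem eulerProduct_union {S T : Set ℕ} (hST : Disjoint S T) :
    eulerProduct R (S ∪ T) = eulerProduct R S * eulerProduct R T :=
  Multipliable.tprod_union_disjoint (f := fun c ↦ 1 - X ^ c) hST
    (multipliable_one_sub_X_pow_subtype S) (multipliable_one_sub_X_pow_subtype T)

theorem eulerProduct_range_two_mul {a : ℕ → ℕ} (ha : StrictMono a) :
    eulerProduct R (Set.range fun i ↦ 2 * a i) =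
      eulerProduct R (Set.range a) * ∏' i, (1 + X ^ a i) := by
  rw [eulerProduct_range (ha.const_mul two_pos), eulerProduct_range ha,
    ← (multipliable_one_sub_X_pow ha).tprod_mul (multipliable_one_add_X_pow ha)]
  exact tprod_congr fun i ↦ by ring

end T2Space

end EulerProduct

section PartitionGenFun

/-- The generating function of the partitions whose multiset of parts satisfies `P`. -/
noncomputable def partitionGenFun (P : Multiset ℕ → Prop) : ℤ⟦X⟧ :=
  PowerSeries.mk fun n ↦ (Nat.card {p : n.Partition // P p.parts} : ℤ)

theorem partitionGenFun_mul_eulerProduct (p : ℕ → Prop) :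
    partitionGenFun (fun s ↦ ∀ c ∈ s, p c) * eulerProduct ℤ {c | 0 < c ∧ p c} = 1 := by
  classical
  have hgen : partitionGenFun (fun s ↦ ∀ c ∈ s, p c) =
      PowerSeries.mk fun n ↦ ((Nat.Partition.restricted n p).card : ℤ) := by
    ext n
    rw [partitionGenFun, coeff_mk, coeff_mk, Nat.card_eq_fintype_card, Fintype.card_subtype]
    rfl
  have hparts : {c | 0 < c ∧ p c} = (· + 1) '' {i | p (i + 1)} := by
    ext c
    cases c <;> simp
  have heuler : HasProd ({i | p (i + 1)}.mulIndicator fun i ↦ 1 - X ^ (i + 1))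
      (eulerProduct ℤ {c | 0 < c ∧ p c}) := by
    rw [hparts, ← hasProd_subtype_iff_mulIndicator]
    exact (Equiv.Set.image _ _ (add_left_injective 1)).hasProd_iff.2
      (multipliable_one_sub_X_pow_subtype _).hasProd
  have hprod := (Nat.Partition.hasProd_powerSeriesMk_card_restricted ℤ p).mul heuler
  have hone (i : ℕ) : ((if p (i + 1) then ∑' j : ℕ, X ^ ((i + 1) * j) else 1 : ℤ⟦X⟧) *
      {i | p (i + 1)}.mulIndicator (fun i ↦ 1 - X ^ (i + 1)) i) = 1 := by
    by_cases hi : p (i + 1)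
    · have hX : constantCoeff (X ^ (i + 1) : ℤ⟦X⟧) = 0 := by simp
      simp [hi, pow_mul, WithPiTopology.tsum_pow_mul_one_sub_of_constantCoeff_eq_zero hX]
    · simp [hi]
  rw [hgen, ← hprod.tprod_eq, tprod_congr hone, tprod_one]

theorem partitionGenFun_hasOddGaps_mul_eulerProduct {k : ℕ} (hk : 0 < k) :
    partitionGenFun (HasOddGaps k) * eulerProduct ℤ (Set.range fun i ↦ 2 * (i + 1)) =
      ∏' i, (1 + X ^ andrewsOddPart k i) := by
  have hlim : Tendsto (fun r ↦ weightGenFun Multiset.sum (gapMultisets k r)) atTop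
      (𝓝 (partitionGenFun (HasOddGaps k))) := by
    refine (WithPiTopology.tendsto_iff_coeff_tendsto _ _ _ _).2 fun n ↦ ?_
    refine tendsto_atTop_of_eventually_const (i₀ := n) fun r hr ↦ ?_
    rw [weightGenFun, partitionGenFun, coeff_mk, coeff_mk, ncard_sum_eq_gapMultisets hr]
  have hsub := (multipliable_one_sub_X_pow (R := ℤ) strictMono_two_mul_succ).hasProd
  have hadd := (multipliable_one_add_X_pow (R := ℤ) (strictMono_andrewsOddPart hk)).hasProd
  rw [eulerProduct_range strictMono_two_mul_succ]
  refine tendsto_nhds_unique (hlim.mul hsub.tendsto_prod_nat) ?_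
  simpa only [weightGenFun_gapMultisets_mul_prod hk] using hadd.tendsto_prod_nat

theorem partitionGenFun_isAndrewsPart {k : ℕ} (hk : 0 < k) :
    partitionGenFun (fun s ↦ ∀ c ∈ s, IsAndrewsPart k c) = partitionGenFun (HasOddGaps k) := by
  set F := partitionGenFun (fun s ↦ ∀ c ∈ s, IsAndrewsPart k c)
  set G := partitionGenFun (HasOddGaps k)
  set P := eulerProduct ℤ {c | 0 < c ∧ IsAndrewsPart k c}
  set E := eulerProduct ℤ (Set.range fun i ↦ 2 * (i + 1))
  set O := eulerProduct ℤ (Set.range (andrewsOddPart k))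
  have hE : E ≠ 0 := eulerProduct_ne_zero fun h ↦ (mem_range_two_mul_succ.1 h).1.ne rfl
  have hO : O ≠ 0 := eulerProduct_ne_zero fun h ↦
    absurd (odd_of_two_mul_dvd_succ ((mem_range_andrewsOddPart hk).1 h)) (by decide)
  have hF : F * P = 1 := partitionGenFun_mul_eulerProduct (IsAndrewsPart k)
  have hG : G * E = ∏' i, (1 + X ^ andrewsOddPart k i) :=
    partitionGenFun_hasOddGaps_mul_eulerProduct hk
  have hEO : E * O = P * (O * ∏' i, (1 + X ^ andrewsOddPart k i)) := by
    rw [← eulerProduct_range_two_mul (strictMono_andrewsOddPart hk),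
      ← eulerProduct_union (disjoint_range_andrewsOddPart hk), range_union_range_andrewsOddPart hk,
      eulerProduct_union (disjoint_isAndrewsPart_range_two_mul hk)]
  refine mul_right_cancel₀ (mul_ne_zero hE hO) ?_
  calc F * (E * O) = F * P * (O * ∏' i, (1 + X ^ andrewsOddPart k i)) := by rw [hEO, mul_assoc]
    _ = G * (E * O) := by rw [hF, ← hG]; ring

end PartitionGenFun

end Andrews

theorem andrews_identity_general {k : ℕ} (hk : 0 < k) (n : ℕ) :
    Nat.card {p : n.Partition // ∀ c ∈ p.parts, Andrews.IsAndrewsPart k c} =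
      Nat.card {p : n.Partition // Andrews.HasOddGaps k p.parts} := by
  have := congrArg (PowerSeries.coeff n) (Andrews.partitionGenFun_isAndrewsPart hk)
  simpa only [Andrews.partitionGenFun, PowerSeries.coeff_mk, Nat.cast_inj] using this

/-- Andrews's family of partition identities (Theorem 3 of
"A new generalization of Schur's second partition theorem").
For `k ≥ 2`, partitions of `n` whose parts are even and `≢ 4k−2 (mod 4k)`,
or odd and `≡ 2k−1` or `4k−1 (mod 4k)`, are equinumerous with partitions of `n`
in which an odd part `b = 2j+1` forbids any other part in `{2j−2k+3, …, 2j, 2j+1}`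
and no part equals any of `1, 3, …, 2k−3`. -/
theorem andrews_identity (k : ℕ) (hk : 2 ≤ k) (n : ℕ) :
    Nat.card {p : Nat.Partition n //
      ∀ c ∈ p.parts, (Even c ∧ c % (4 * k) ≠ 4 * k - 2) ∨
        (Odd c ∧ (c % (4 * k) = 2 * k - 1 ∨ c % (4 * k) = 4 * k - 1))} =
    Nat.card {p : Nat.Partition n //
      (∀ b ∈ p.parts, Odd b → ∀ c : ℕ, b + 2 ≤ c + 2 * k → c ≤ b →
        Multiset.count c p.parts ≤ if c = b then 1 else 0) ∧
      (∀ c ∈ p.parts, Odd c → ¬ (c + 3 ≤ 2 * k))} := by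
  simpa only [Andrews.isAndrewsPart_iff (two_pos.trans_le hk), Andrews.hasOddGaps_iff] using
    andrews_identity_general (two_pos.trans_le hk) n
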